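/- The path graph P_m of even order m is both positively and negatively integrally invertible: A⁻¹ is integral, positively signable by the signature matrix with d_i = 1 for i ≡ 1, 2 (mod 4) and d_i = −1 for i ≡ 3, 0 (mod 4), and negatively signable by the signature matrix with d_i = 1 for i ≡ 1, 0 (mod 4) and d_i = −1 for i ≡ 2, 3 (mod 4). -/

import Mathlib

/-!
With vertices numbered `0, …, m - 1`, solving `A x = e_j` by forward substitution shows that for even
`m` the inverse of `A` is the symmetric matrix whose `(i, j)` entry for `i < j` is
`(-1) ^ ((j - i - 1) / 2)` if `i` is even and `j` is odd, and `0` otherwise. In graph terms, `A⁻¹` is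
nonzero exactly where deleting the subpath from `i` to `j` leaves a graph with a perfect matching.
The product identity `pathInv_step` verifies this, and integrality is then immediate.
Both sign claims depend only on the residues of `i` and `j` modulo `4`.
-/

open Matrix

/-- The four Moore-Penrose (Penrose) axioms for a real matrix `K` and candidate inverse `K'`. -/
def IsMoorePenrose {α β : Type*} [Fintype α] [Fintype β]
    (K : Matrix α β ℝ) (K' : Matrix β α ℝ) : Prop :=
  (K * K')ᵀ = K * K' ∧ (K' * K)ᵀ = K' * K ∧ K * K' * K = K ∧ K' * K * K' = K'

/-- Diagonal entries of a ±1 signature matrix. -/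
def IsSign {α : Type*} (d : α → ℝ) : Prop := ∀ i, d i = 1 ∨ d i = -1

/-- Entries of the inverse of the adjacency matrix of an even path, with vertices numbered from `0`.
They do not depend on the order of the path. For `i < j` with `i` even and `j` odd, `j - i` is odd, so
the sign `(-1) ^ ((j - i - 1) / 2)` is read off from `j - i` modulo `4`. -/
def pathInv (i j : ℕ) : ℤ :=
  if i % 2 = 0 ∧ j % 2 = 1 ∧ i < j then (if (j - i) % 4 = 1 then 1 else -1)
  else if j % 2 = 0 ∧ i % 2 = 1 ∧ j < i then (if (i - j) % 4 = 1 then 1 else -1)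
  else 0

/-- Row `i` of the identity `A * B = 1`, where `B` has entries `pathInv`: the sum runs over the
neighbours of `i` in the path. Evenness of `m` makes the missing neighbour `m` of the last vertex
harmless, since `pathInv m j = 0` for `j < m`. -/
lemma pathInv_step (m i j : ℕ) (hm : m % 2 = 0) (hi : i < m) (hj : j < m) :
    (if i + 1 < m then pathInv (i + 1) j else 0) + (if 0 < i then pathInv (i - 1) j else 0)
      = if i = j then 1 else 0 := by
  unfold pathInv
  split_ifs <;> omega

lemma sum_path_row (m i : ℕ) (hi : i < m) (f : ℕ → ℝ) :
    ∑ k : Fin m, (if i + 1 = (k : ℕ) ∨ (k : ℕ) + 1 = i then (1 : ℝ) else 0) * f k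
      = (if i + 1 < m then f (i + 1) else 0) + (if 0 < i then f (i - 1) else 0) := by
  rw [Fin.sum_univ_eq_sum_range
    (fun k => (if i + 1 = k ∨ k + 1 = i then (1 : ℝ) else 0) * f k) m]
  have h : ∀ k ∈ Finset.range m, (if i + 1 = k ∨ k + 1 = i then (1 : ℝ) else 0) * f k
      = (if i + 1 = k then f k else 0)
        + (if i - 1 = k then (if 0 < i then f k else 0) else 0) := by
    intro k _
    split_ifs <;> first | omega | simp
  rw [Finset.sum_congr rfl h, Finset.sum_add_distrib, Finset.sum_ite_eq, Finset.sum_ite_eq]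
  have h' : i - 1 < m := by omega
  simp [h']

/-- The path `P_m` of even order is positively and negatively integrally invertible, with the
explicit signature matrices (1-based index `i+1` modulo 4). -/
theorem stmt_8 (m : ℕ) (hm : Even m) (hpos : 0 < m)
    (A : Matrix (Fin m) (Fin m) ℝ)
    (hA : ∀ i j : Fin m, A i j = if (i : ℕ) + 1 = j ∨ (j : ℕ) + 1 = i then 1 else 0) :
    IsUnit A.det ∧
    (∀ i j, ∃ z : ℤ, A⁻¹ i j = (z : ℝ)) ∧
    (∀ i j, 0 ≤ (Matrix.diagonal
        (fun i : Fin m => if ((i : ℕ) + 1) % 4 = 1 ∨ ((i : ℕ) + 1) % 4 = 2 then (1:ℝ) else -1) *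
        A⁻¹ * Matrix.diagonal
        (fun i : Fin m => if ((i : ℕ) + 1) % 4 = 1 ∨ ((i : ℕ) + 1) % 4 = 2 then (1:ℝ) else -1)) i j) ∧
    (∀ i j, (Matrix.diagonal
        (fun i : Fin m => if ((i : ℕ) + 1) % 4 = 1 ∨ ((i : ℕ) + 1) % 4 = 0 then (1:ℝ) else -1) *
        A⁻¹ * Matrix.diagonal
        (fun i : Fin m => if ((i : ℕ) + 1) % 4 = 1 ∨ ((i : ℕ) + 1) % 4 = 0 then (1:ℝ) else -1)) i j ≤ 0) := by
  have hmul : A * Matrix.of (fun i j : Fin m => (pathInv i j : ℝ)) = 1 := by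
    ext i j
    rw [Matrix.mul_apply]
    simp only [hA, Matrix.of_apply]
    rw [sum_path_row m i i.isLt (fun k => (pathInv k j : ℝ))]
    have h := pathInv_step m i j (Nat.even_iff.mp hm) i.isLt j.isLt
    rw [Matrix.one_apply]
    simp only [Fin.ext_iff]
    exact_mod_cast h
  rw [Matrix.inv_eq_right_inv hmul]
  refine ⟨Matrix.isUnit_det_of_right_inverse hmul, fun i j => ⟨pathInv i j, rfl⟩, ?_, ?_⟩
  · intro i j
    rw [Matrix.mul_diagonal, Matrix.diagonal_mul, Matrix.of_apply]
    unfold pathInv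
    split_ifs <;> first | omega | norm_num
  · intro i j
    rw [Matrix.mul_diagonal, Matrix.diagonal_mul, Matrix.of_apply]
    unfold pathInv
    split_ifs <;> first | omega | norm_num
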